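/- If ξ is an absolutely continuous vector field along γ|[0,s] with ∫_0^s (E−V(γ)) g(Dξ/ds, Dξ/ds) ds < ∞, ξ(0) ∈ T_{γ(0)}V⁻¹(E) and ξ(s) = W, then lim_{s→0⁺} g(∇V(γ(s)), ξ(s)) g(γ̇(s), ξ(s)) = 0. -/

import Mathlib

open MeasureTheory Set Matrix Filter Topology

namespace JacobiPaper

noncomputable section

/-- Points/vectors of the ambient space `ℝ^N` in which the manifold `M` is
topologically embedded as an open subset. -/
abbrev Vec (N : ℕ) := Fin N → ℝ

variable {N : ℕ}

/-- The inner product determined by a field of matrices `g` at the point `x`. -/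
def gP (g : Vec N → Matrix (Fin N) (Fin N) ℝ) (x v w : Vec N) : ℝ :=
  ∑ i, ∑ j, g x i j * v i * w j

/-- The Euclidean gradient (the differential, as a vector). -/
def euclGrad (V : Vec N → ℝ) (x : Vec N) : Vec N :=
  fun i => fderiv ℝ V x (Pi.single i 1)

/-- The setting of the paper: a `C³` Riemannian metric `g` on a neighborhood `U` of
the compact sublevel `V⁻¹((-∞,E])`, with `V` of class `C²` there and `E` a regular
value of `V`. -/
structure Setting (N : ℕ) where
  g : Vec N → Matrix (Fin N) (Fin N) ℝ
  V : Vec N → ℝ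
  E : ℝ
  U : Set (Vec N)
  hdim : 1 ≤ N
  hU : IsOpen U
  hsub : {x | V x ≤ E} ⊆ U
  hgC : ∀ i j, ContDiffOn ℝ 3 (fun x => g x i j) U
  hgsymm : ∀ x ∈ U, ∀ i j, g x i j = g x j i
  hgpos : ∀ x ∈ U, ∀ v : Vec N, v ≠ 0 → 0 < gP g x v v
  hVC : ContDiffOn ℝ 2 V U
  hreg : ∀ x, V x = E → euclGrad V x ≠ 0
  hcomp : IsCompact {x : Vec N | V x ≤ E}

namespace Setting

variable (S : Setting N)

/-- The Riemannian inner product `g_x(v,w)`. -/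
def prod (x v w : Vec N) : ℝ := gP S.g x v w

/-- The Riemannian norm `‖v‖_x`. -/
def gnorm (x v : Vec N) : ℝ := Real.sqrt (S.prod x v v)

/-- The gradient of `V` with respect to `g`. -/
def grad (x : Vec N) : Vec N := (S.g x)⁻¹ *ᵥ euclGrad S.V x

/-- Christoffel symbols `Γ^k_{ij}` of the Levi-Civita connection of `g`. -/
def christoffel (x : Vec N) (k i j : Fin N) : ℝ :=
  (1/2) * ∑ l, (S.g x)⁻¹ k l *
    (fderiv ℝ (fun y => S.g y l j) x (Pi.single i 1)
     + fderiv ℝ (fun y => S.g y l i) x (Pi.single j 1)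
     - fderiv ℝ (fun y => S.g y i j) x (Pi.single l 1))

/-- Covariant derivative, along the curve `q` with velocity `q'`, of the vector field
`ξ` whose (pointwise) derivative is `ξ'`. -/
def covD (q q' ξ ξ' : ℝ → Vec N) (s : ℝ) : Vec N :=
  fun k => ξ' s k + ∑ i, ∑ j, S.christoffel (q s) k i j * q' s i * ξ s j

/-- The Riemann curvature tensor `R(u,v)w` of `g` at `x`. -/
def curv (x u v w : Vec N) : Vec N :=
  fun l => ∑ i, ∑ j, ∑ k, u i * v j * w k *
    (fderiv ℝ (fun y => S.christoffel y l j k) x (Pi.single i 1)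
     - fderiv ℝ (fun y => S.christoffel y l i k) x (Pi.single j 1)
     + ∑ m, (S.christoffel x l i m * S.christoffel x m j k
             - S.christoffel x l j m * S.christoffel x m i k))

/-- The Hessian operator of `V` with respect to `g`: `ξ ↦ ∇_ξ ∇V`. -/
def hessV (x ξ : Vec N) : Vec N :=
  fun k => ∑ i, ξ i * (fderiv ℝ (fun y => S.grad y k) x (Pi.single i 1)
    + ∑ j, S.christoffel x k i j * S.grad x j)

/-- The Jacobi-metric geodesic equation (eq. (2.5) of the paper) at the instant `s`,
for a curve `x` with derivative `x'` and second derivative `x''`. -/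
def GeoEqAt (x x' x'' : ℝ → Vec N) (s : ℝ) : Prop :=
  ∀ k, (S.E - S.V (x s)) * S.covD x x' x' x'' s k
    - S.prod (x s) (S.grad (x s)) (x' s) * x' s k
    + (1/2) * S.prod (x s) (x' s) (x' s) * S.grad (x s) k = 0

end Setting

/-- `q` is of class `C²` on `I` with first derivative `q'` and second derivative `q''`. -/
def C2OnWith (q q' q'' : ℝ → Vec N) (I : Set ℝ) : Prop :=
  (∀ t ∈ I, HasDerivWithinAt q (q' t) I t) ∧
  (∀ t ∈ I, HasDerivWithinAt q' (q'' t) I t) ∧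
  ContinuousOn q'' I

/-- `x` belongs to the Sobolev space `H¹([a,b],ℝ^N)`: it is absolutely continuous
(primitive of its a.e. derivative) with square-integrable derivative. -/
def H1On (x : ℝ → Vec N) (a b : ℝ) : Prop :=
  ContinuousOn x (Icc a b) ∧
  IntegrableOn (deriv x) (Icc a b) ∧
  IntegrableOn (fun s => ‖deriv x s‖ ^ 2) (Icc a b) ∧
  ∀ t ∈ Icc a b, x t = x a + ∫ s in a..t, deriv x s

/-- `x` is absolutely continuous on `[a,b]`. -/
def ACOn (x : ℝ → Vec N) (a b : ℝ) : Prop :=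
  ContinuousOn x (Icc a b) ∧
  IntegrableOn (deriv x) (Icc a b) ∧
  ∀ t ∈ Icc a b, x t = x a + ∫ s in a..t, deriv x s

namespace Setting

variable (S : Setting N)

/-- The weak (distributional) form (eq. (2.7)) of the Jacobi geodesic equation on `(a,b)`,
tested against all `ξ ∈ C^∞_0((a,b),ℝ^N)`. -/
def WeakGeo (x : ℝ → Vec N) (a b : ℝ) : Prop :=
  ∀ ξ : ℝ → Vec N, ContDiff ℝ (⊤ : ℕ∞) ξ → tsupport ξ ⊆ Ioo a b →
    (∫ s in a..b,
      ((S.E - S.V (x s)) * S.prod (x s) (deriv x s) (S.covD x (deriv x) ξ (deriv ξ) s)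
        - (1/2) * S.prod (x s) (deriv x s) (deriv x s)
            * S.prod (x s) (S.grad (x s)) (ξ s))) = 0

/-- The space `X_Q`. -/
def InXQ (Q : Vec N) (x : ℝ → Vec N) : Prop :=
  H1On x 0 1 ∧ S.V (x 0) = S.E ∧ (∀ s ∈ Ioc (0:ℝ) 1, S.V (x s) < S.E) ∧ x 1 = Q

/-- The Jacobi length functional `L_V`. -/
def LV (x : ℝ → Vec N) : ℝ :=
  ∫ s in (0:ℝ)..1,
    Real.sqrt ((1/2) * (S.E - S.V (x s)) * S.prod (x s) (deriv x s) (deriv x s))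

/-- The distance `d_V(Q)` from `Q` to the boundary of the potential well. -/
def dV (Q : Vec N) : ℝ := sInf {r | ∃ x, S.InXQ Q x ∧ r = S.LV x}

/-- `γ : [0,a] → M` is a `g_*`-geodesic starting at `V⁻¹(E)`, staying in the potential
well for `s > 0`, parameterized by arc length (`½ g(γ̇,γ̇)(E−V(γ)) ≡ 1`). -/
def IsBdryGeo (γ : ℝ → Vec N) (a : ℝ) : Prop :=
  0 < a ∧
  ContinuousOn γ (Icc 0 a) ∧
  (∀ s ∈ Ioc (0:ℝ) a, ContDiffAt ℝ 2 γ s) ∧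
  S.V (γ 0) = S.E ∧
  (∀ s ∈ Ioc (0:ℝ) a, S.V (γ s) < S.E) ∧
  (∀ s ∈ Ioc (0:ℝ) a, S.GeoEqAt γ (deriv γ) (deriv (deriv γ)) s) ∧
  (∀ s ∈ Ioc (0:ℝ) a, (1/2) * S.prod (γ s) (deriv γ s) (deriv γ s) * (S.E - S.V (γ s)) = 1)

/-- The index form `I_{s₁,s₂}(ξ,η)` along `γ`. -/
def idxForm (γ : ℝ → Vec N) (s₁ s₂ : ℝ) (ξ η : ℝ → Vec N) : ℝ :=
  ∫ u in s₁..s₂,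
    ((S.E - S.V (γ u)) *
        (S.prod (γ u) (S.covD γ (deriv γ) ξ (deriv ξ) u) (S.covD γ (deriv γ) η (deriv η) u)
          + S.prod (γ u) (S.curv (γ u) (deriv γ u) (ξ u) (deriv γ u)) (η u))
      - (S.prod (γ u) (S.grad (γ u)) (ξ u)
            * S.prod (γ u) (deriv γ u) (S.covD γ (deriv γ) η (deriv η) u)
          + S.prod (γ u) (deriv γ u) (S.covD γ (deriv γ) ξ (deriv ξ) u)
            * S.prod (γ u) (S.grad (γ u)) (η u)
          + (1/2) * S.prod (γ u) (S.hessV (γ u) (ξ u)) (η u)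
            * S.prod (γ u) (deriv γ u) (deriv γ u)))

/-- Membership in the space `Y_s^W`: absolutely continuous vector fields along `γ|[0,s]`
with finite weighted norm, with `ξ(0) ∈ T_{γ(0)}V⁻¹(E)` and `ξ(s) = W`. -/
def InY (γ : ℝ → Vec N) (s : ℝ) (W : Vec N) (ξ : ℝ → Vec N) : Prop :=
  ACOn ξ 0 s ∧
  IntegrableOn (fun u => (S.E - S.V (γ u)) *
      S.prod (γ u) (S.covD γ (deriv γ) ξ (deriv ξ) u)
        (S.covD γ (deriv γ) ξ (deriv ξ) u)) (Icc 0 s) ∧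
  S.prod (γ 0) (S.grad (γ 0)) (ξ 0) = 0 ∧
  ξ s = W

/-- The weighted squared norm `⟨ξ,ξ⟩_{0,s}`. -/
def wNormSq (γ : ℝ → Vec N) (s : ℝ) (ξ : ℝ → Vec N) : ℝ :=
  ∫ u in (0:ℝ)..s, (S.E - S.V (γ u)) *
    S.prod (γ u) (S.covD γ (deriv γ) ξ (deriv ξ) u) (S.covD γ (deriv γ) ξ (deriv ξ) u)

/-- The Jacobi field equation (eq. (4.9)) at the instant `u`. -/
def JacobiEqAt (γ ξ : ℝ → Vec N) (u : ℝ) : Prop :=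
  ∀ k, - deriv (fun t => (S.E - S.V (γ t)) * S.covD γ (deriv γ) ξ (deriv ξ) t k) u
      + (S.E - S.V (γ u)) * S.curv (γ u) (deriv γ u) (ξ u) (deriv γ u) k
      + deriv (fun t => S.prod (γ t) (S.grad (γ t)) (ξ t) * deriv γ t k) u
      - S.prod (γ u) (deriv γ u) (S.covD γ (deriv γ) ξ (deriv ξ) u) * S.grad (γ u) k
      - (1/2) * S.prod (γ u) (deriv γ u) (deriv γ u) * S.hessV (γ u) (ξ u) k = 0

/-- `ξ` is a Jacobi field along `γ|[0,s]`: of class `C⁰([0,s]) ∩ C²((0,s])` and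
solving the Jacobi equation on `(0,s]`. -/
def IsJacobi (γ ξ : ℝ → Vec N) (s : ℝ) : Prop :=
  ContinuousOn ξ (Icc 0 s) ∧ (∀ u ∈ Ioc (0:ℝ) s, ContDiffAt ℝ 2 ξ u) ∧
  ∀ u ∈ Ioc (0:ℝ) s, S.JacobiEqAt γ ξ u

/-- The boundary condition (eq. (4.10)): the continuous extension at `s = 0` of
`(E−V(γ))Dξ/ds − g(∇V(γ),ξ)γ̇` is parallel to `∇V(γ(0))`. -/
def BdryCond (γ ξ : ℝ → Vec N) : Prop :=
  ∃ c : ℝ, Tendsto (fun u => (fun k => (S.E - S.V (γ u)) * S.covD γ (deriv γ) ξ (deriv ξ) u k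
      - S.prod (γ u) (S.grad (γ u)) (ξ u) * deriv γ u k))
    (nhdsWithin 0 (Ioi 0)) (nhds (c • S.grad (γ 0)))

end Setting

/-- The family `ξ : Fin n → (ℝ → Vec N)` is linearly independent as fields on `I`. -/
def IndepOn {n : ℕ} (I : Set ℝ) (ξ : Fin n → ℝ → Vec N) : Prop :=
  ∀ c : Fin n → ℝ, (∀ u ∈ I, (∑ i, c i • ξ i) u = 0) → c = 0

/-- The index of the quadratic form `B` on the class `C` of vector fields (regarded as
fields on `I`) is at least `n`. -/
def IndexGe {N : ℕ} (B : (ℝ → Vec N) → ℝ) (C : (ℝ → Vec N) → Prop) (I : Set ℝ) (n : ℕ) : Prop :=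
  ∃ ξ : Fin n → ℝ → Vec N, (∀ i, C (ξ i)) ∧ IndepOn I ξ ∧
    ∀ c : Fin n → ℝ, c ≠ 0 → B (∑ i, c i • ξ i) < 0

/-- The index of the quadratic form `B` on the class `C` equals `n`. -/
def IndexEq {N : ℕ} (B : (ℝ → Vec N) → ℝ) (C : (ℝ → Vec N) → Prop) (I : Set ℝ) (n : ℕ) : Prop :=
  IndexGe B C I n ∧ ¬ IndexGe B C I (n+1)

/-- The nullity of a bilinear form `B` on the class `C` is at least `n`. -/
def NullGe {N : ℕ} (B : (ℝ → Vec N) → (ℝ → Vec N) → ℝ) (C : (ℝ → Vec N) → Prop)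
    (I : Set ℝ) (n : ℕ) : Prop :=
  ∃ ξ : Fin n → ℝ → Vec N, (∀ i, C (ξ i)) ∧ IndepOn I ξ ∧
    ∀ i, ∀ η, C η → B (ξ i) η = 0

/-- The nullity of a bilinear form `B` on the class `C` equals `n`. -/
def NullEq {N : ℕ} (B : (ℝ → Vec N) → (ℝ → Vec N) → ℝ) (C : (ℝ → Vec N) → Prop)
    (I : Set ℝ) (n : ℕ) : Prop :=
  NullGe B C I n ∧ ¬ NullGe B C I (n+1)

namespace Setting

variable (S : Setting N)

/-- `ξ` is a (nontrivial candidate) field realizing conjugacy at `γ(s)`: a Jacobi field in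
`Y_s` satisfying the boundary condition (4.10). -/
def ConjField (γ : ℝ → Vec N) (s : ℝ) (ξ : ℝ → Vec N) : Prop :=
  S.InY γ s 0 ξ ∧ S.IsJacobi γ ξ s ∧ S.BdryCond γ ξ

/-- `γ(s)` is conjugate to `V⁻¹(E)` with multiplicity at least `n`. -/
def MultGe (γ : ℝ → Vec N) (s : ℝ) (n : ℕ) : Prop :=
  ∃ ξ : Fin n → ℝ → Vec N, (∀ i, S.ConjField γ s (ξ i)) ∧ IndepOn (Icc 0 s) ξ

/-- `γ(s)` is conjugate to `V⁻¹(E)`. -/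
def IsConj (γ : ℝ → Vec N) (s : ℝ) : Prop := S.MultGe γ s 1

/-- `γ(s)` is conjugate to `V⁻¹(E)` with multiplicity exactly `n`. -/
def Mult (γ : ℝ → Vec N) (s : ℝ) (n : ℕ) : Prop :=
  S.MultGe γ s n ∧ ¬ S.MultGe γ s (n+1)

end Setting

/-!
Use Newtonian time, `dτ = ds / (E - V(γ))`. In it the energy gap `φ = E - V(γ)` vanishes
quadratically and its derivative `h` linearly, with `h' → |∇V(γ 0)|² > 0`; in arc length,
`φ h' → |∇V(γ 0)|²` and `φ` is comparable to `h²`.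

Comparing derivatives gives `2 φ |∇V|² - h² = O(φ²)`, so the component `τ` of `γ'` tangent to the
level sets of `V` is bounded, and `γ' = τ - h / (φ |∇V|²) ∇V`. Hence
`g(∇V, ξ) g(γ', ξ) = dV(ξ) g(τ, ξ) - h / (φ |∇V|²) dV(ξ)²`. The first term tends to zero because
`ξ(0)` is tangent to the boundary. For the second, Cauchy–Schwarz with the weight `φ⁻¹ = O(h')`
gives `|ξ - ξ(0)|² = o(h)`, hence `dV(ξ)² = o(h)`, and `h² = O(φ)`.
-/

open Asymptotics

section Asymptotics

variable {F : Type*} [NormedAddCommGroup F]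

lemma eventually_forall_mem_Ioc {p : ℝ → Prop} {a : ℝ} (h : ∀ᶠ t in 𝓝[>] a, p t) :
    ∀ᶠ t in 𝓝[>] a, ∀ x ∈ Ioc a t, p x := by
  obtain ⟨b, hab, hb⟩ := mem_nhdsGT_iff_exists_Ioo_subset.1 h
  filter_upwards [Ioo_mem_nhdsGT hab] with t ht x hx
  exact hb ⟨hx.1, hx.2.trans_lt ht.2⟩

lemma isBigO_norm_add_sq {α : Type*} (l : Filter α) (f g : α → F) :
    (fun x => ‖f x + g x‖ ^ 2) =O[l] fun x => ‖f x‖ ^ 2 + ‖g x‖ ^ 2 := by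
  refine IsBigO.of_bound 2 (.of_forall fun x => ?_)
  rw [Real.norm_of_nonneg (by positivity), Real.norm_of_nonneg (by positivity)]
  exact (pow_le_pow_left₀ (norm_nonneg _) (norm_add_le _ _) 2).trans add_sq_le

lemma isBigO_clm_apply {α 𝕜 G : Type*} [NontriviallyNormedField 𝕜] [NormedSpace 𝕜 F]
    [NormedAddCommGroup G] [NormedSpace 𝕜 G] {l : Filter α} {L : α → F →L[𝕜] G} {v : α → F}
    {f g : α → ℝ} (hL : L =O[l] f) (hv : v =O[l] g) :
    (fun x => L x (v x)) =O[l] fun x => f x * g x :=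
  (IsBigO.of_norm_le fun x => (L x).le_opNorm (v x)).trans (hL.norm_left.mul hv.norm_left)

variable [NormedSpace ℝ F] {a : ℝ} {f f' : ℝ → F} {g g' : ℝ → ℝ}

lemma eventually_norm_sub_le_of_deriv (hf : ContinuousWithinAt f (Ioi a) a)
    (hg : ContinuousWithinAt g (Ioi a) a) (hf' : ∀ᶠ t in 𝓝[>] a, HasDerivAt f (f' t) t)
    (hg' : ∀ᶠ t in 𝓝[>] a, HasDerivAt g (g' t) t) (hle : ∀ᶠ t in 𝓝[>] a, ‖f' t‖ ≤ g' t) :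
    ∀ᶠ t in 𝓝[>] a, ‖f t - f a‖ ≤ g t - g a := by
  filter_upwards [self_mem_nhdsWithin, eventually_forall_mem_Ioc (hf'.and (hg'.and hle))]
    with t hat h
  have hincr : ∀ x ∈ Ioc a t, ‖f t - f x‖ ≤ g t - g x := fun x hx => by
    have hIcc : ∀ y ∈ Icc x t, y ∈ Ioc a t := fun y hy => ⟨hx.1.trans_le hy.1, hy.2⟩
    have hfd : ∀ y ∈ Icc x t, HasDerivAt (fun z => f z - f x) (f' y) y := fun y hy =>
      (h y (hIcc y hy)).1.sub_const _
    have hgd : ∀ y ∈ Icc x t, HasDerivAt (fun z => g z - g x) (g' y) y := fun y hy =>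
      (h y (hIcc y hy)).2.1.sub_const _
    exact image_norm_le_of_norm_deriv_right_le_deriv_boundary'
      (fun y hy => (hfd y hy).continuousAt.continuousWithinAt)
      (fun y hy => (hfd y (Ico_subset_Icc_self hy)).hasDerivWithinAt) (by simp)
      (fun y hy => (hgd y hy).continuousAt.continuousWithinAt)
      (fun y hy => (hgd y (Ico_subset_Icc_self hy)).hasDerivWithinAt)
      (fun y hy => (h y (hIcc y (Ico_subset_Icc_self hy))).2.2) (right_mem_Icc.2 hx.2)
  exact le_of_tendsto_of_tendsto (tendsto_const_nhds.sub hf).norm (tendsto_const_nhds.sub hg)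
    (mem_of_superset (Ioc_mem_nhdsGT hat) hincr)

lemma isBigO_sub_of_deriv (hf : ContinuousWithinAt f (Ioi a) a)
    (hg : ContinuousWithinAt g (Ioi a) a) (hf' : ∀ᶠ t in 𝓝[>] a, HasDerivAt f (f' t) t)
    (hg' : ∀ᶠ t in 𝓝[>] a, HasDerivAt g (g' t) t) (hg'_nonneg : ∀ᶠ t in 𝓝[>] a, 0 ≤ g' t)
    (h : f' =O[𝓝[>] a] g') :
    (fun t => f t - f a) =O[𝓝[>] a] fun t => g t - g a := by
  obtain ⟨C, hC, hle⟩ := h.exists_pos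
  refine IsBigO.of_bound C ?_
  have hbound : ∀ᶠ t in 𝓝[>] a, ‖f' t‖ ≤ C * g' t := by
    filter_upwards [hle.bound, hg'_nonneg] with t ht hg't
    rwa [Real.norm_of_nonneg hg't] at ht
  filter_upwards [eventually_norm_sub_le_of_deriv hf (hg.const_mul C) hf'
    (hg'.mono fun t ht => ht.const_mul C) hbound] with t ht
  rw [← mul_sub] at ht
  exact ht.trans (mul_le_mul_of_nonneg_left (le_abs_self _) hC.le)

end Asymptotics

section CauchySchwarz

lemma sq_integral_le_integral_mul_integral {α : Type*} [MeasurableSpace α] {μ : Measure α}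
    {u p b : α → ℝ} (hu : Integrable u μ) (hp : Integrable p μ) (hb : Integrable b μ)
    (hp_nonneg : 0 ≤ᵐ[μ] p) (hb_nonneg : 0 ≤ᵐ[μ] b) (h : ∀ᵐ x ∂μ, u x ^ 2 ≤ p x * b x) :
    (∫ x, u x ∂μ) ^ 2 ≤ (∫ x, p x ∂μ) * ∫ x, b x ∂μ := by
  have hquad : ∀ r : ℝ, 0 ≤ (∫ x, p x ∂μ) * (r * r) + (2 * ∫ x, u x ∂μ) * r + ∫ x, b x ∂μ := by
    intro r
    have hint : (∫ x, p x ∂μ) * (r * r) + (2 * ∫ x, u x ∂μ) * r + ∫ x, b x ∂μ =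
        ∫ x, (p x * (r * r) + u x * (2 * r) + b x) ∂μ := by
      have hpu : Integrable (fun x => p x * (r * r) + u x * (2 * r)) μ :=
        (hp.mul_const _).add (hu.mul_const _)
      rw [integral_add hpu hb,
        integral_add (hp.mul_const _) (hu.mul_const _), integral_mul_const, integral_mul_const]
      ring
    rw [hint]
    refine integral_nonneg_of_ae ?_
    filter_upwards [hp_nonneg, hb_nonneg, h] with x hpx hbx hx
    change 0 ≤ p x at hpx
    change 0 ≤ b x at hbx
    change 0 ≤ p x * (r * r) + u x * (2 * r) + b x
    have hpr : 0 ≤ p x * (r * r) := mul_nonneg hpx (mul_self_nonneg r)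
    have hsq : (u x * (2 * r)) ^ 2 ≤ (p x * (r * r) + b x) ^ 2 := by
      linear_combination (4 * r ^ 2) * hx + sq_nonneg (p x * (r * r) - b x)
    linarith [(abs_le.1 (abs_le_of_sq_le_sq hsq (add_nonneg hpr hbx))).1]
  have hdiscrim := discrim_le_zero hquad
  rw [discrim] at hdiscrim
  linarith

variable {F : Type*} [NormedAddCommGroup F] [NormedSpace ℝ F]

lemma norm_sub_sq_le_of_sq_norm_le_deriv_mul {f f' : ℝ → F} {h h' b : ℝ → ℝ} {a t : ℝ}
    (hat : a ≤ t) (hf : f t = f a + ∫ x in a..t, f' x) (hf' : IntegrableOn f' (Ioc a t))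
    (hb : IntegrableOn b (Ioc a t)) (hb_nonneg : ∀ x, 0 ≤ b x) (hh : ContinuousOn h (Icc a t))
    (hh' : ∀ x ∈ Ioc a t, HasDerivAt h (h' x) x) (hh'_nonneg : ∀ x ∈ Ioc a t, 0 ≤ h' x)
    (hle : ∀ x ∈ Ioc a t, ‖f' x‖ ^ 2 ≤ h' x * b x) :
    ‖f t - f a‖ ^ 2 ≤ (h t - h a) * ∫ x in a..t, b x := by
  have hh'_Ioo : ∀ x ∈ Ioo a t, HasDerivAt h (h' x) x := fun x hx => hh' x (Ioo_subset_Ioc_self hx)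
  have hh'_int : IntegrableOn h' (Ioc a t) :=
    intervalIntegral.integrableOn_deriv_of_nonneg hh hh'_Ioo
      fun x hx => hh'_nonneg x (Ioo_subset_Ioc_self hx)
  have hftc : ∫ x in a..t, h' x = h t - h a :=
    intervalIntegral.integral_eq_sub_of_hasDerivAt_of_le hat hh hh'_Ioo
      ((intervalIntegrable_iff_integrableOn_Ioc_of_le hat).2 hh'_int)
  calc ‖f t - f a‖ ^ 2 = ‖∫ x in a..t, f' x‖ ^ 2 := by rw [hf, add_sub_cancel_left]
    _ ≤ (∫ x in a..t, ‖f' x‖) ^ 2 := by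
      gcongr
      exact intervalIntegral.norm_integral_le_integral_norm hat
    _ ≤ (∫ x in a..t, h' x) * ∫ x in a..t, b x := by
      simp only [intervalIntegral.integral_of_le hat]
      exact sq_integral_le_integral_mul_integral hf'.norm hh'_int hb
        (ae_restrict_of_forall_mem measurableSet_Ioc hh'_nonneg)
        (.of_forall hb_nonneg) (ae_restrict_of_forall_mem measurableSet_Ioc hle)
    _ = (h t - h a) * ∫ x in a..t, b x := by rw [hftc]

lemma isLittleO_norm_sub_sq_of_deriv {f f' : ℝ → F} {h h' b : ℝ → ℝ} {a s : ℝ} (has : a < s)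
    (hf : ∀ t ∈ Icc a s, f t = f a + ∫ x in a..t, f' x) (hf' : IntegrableOn f' (Icc a s))
    (hb : IntegrableOn b (Icc a s)) (hh : ContinuousWithinAt h (Ioi a) a)
    (hh' : ∀ᶠ t in 𝓝[>] a, HasDerivAt h (h' t) t) (hh'_nonneg : ∀ᶠ t in 𝓝[>] a, 0 ≤ h' t)
    (hle : (fun t => ‖f' t‖ ^ 2) =O[𝓝[>] a] fun t => h' t * b t) :
    (fun t => ‖f t - f a‖ ^ 2) =o[𝓝[>] a] fun t => h t - h a := by
  obtain ⟨C, hC, hbound⟩ := hle.exists_pos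
  have hB : IntegrableOn (fun t => C * ‖b t‖) (Icc a s) := hb.norm.const_mul C
  have hprim : Tendsto (fun t => ∫ x in a..t, C * ‖b x‖) (𝓝[>] a) (𝓝 0) := by
    have hcont := intervalIntegral.continuousOn_primitive_interval (f := fun t => C * ‖b t‖)
      (μ := volume) (by rwa [uIcc_of_le has.le]) a left_mem_uIcc
    rw [uIcc_of_le has.le] at hcont
    have hIoc := hcont.mono Ioc_subset_Icc_self
    rwa [ContinuousWithinAt, nhdsWithin_Ioc_eq_nhdsGT has, intervalIntegral.integral_same] at hIoc
  have hprod : (fun t => (h t - h a) * ∫ x in a..t, C * ‖b x‖) =o[𝓝[>] a] fun t => h t - h a := by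
    simpa using (isBigO_refl (fun t => h t - h a) _).mul_isLittleO ((isLittleO_one_iff ℝ).2 hprim)
  refine IsBigO.trans_isLittleO (IsBigO.of_norm_eventuallyLE ?_) hprod
  filter_upwards [Ioc_mem_nhdsGT has,
    eventually_forall_mem_Ioc (hh'.and (hh'_nonneg.and hbound.bound))] with t ht hloc
  have hsub : Ioc a t ⊆ Icc a s := fun x hx => ⟨hx.1.le, hx.2.trans ht.2⟩
  rw [Real.norm_of_nonneg (by positivity)]
  refine norm_sub_sq_le_of_sq_norm_le_deriv_mul ht.1.le (hf t ⟨ht.1.le, ht.2⟩)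
    (hf'.mono_set hsub) (hB.mono_set hsub) (fun x => by positivity) (fun x hx => ?_)
    (fun x hx => (hloc x hx).1) (fun x hx => (hloc x hx).2.1) fun x hx => ?_
  · rcases hx.1.eq_or_lt with rfl | hax
    · exact (continuousWithinAt_Ioi_iff_Ici.1 hh).mono Icc_subset_Ici_self
    · exact (hloc x ⟨hax, hx.2⟩).1.continuousAt.continuousWithinAt
  · obtain ⟨-, hnonneg, hx'⟩ := hloc x hx
    rw [norm_mul, Real.norm_of_nonneg hnonneg, Real.norm_of_nonneg (by positivity)] at hx'
    linarith

end CauchySchwarz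

section Matrix

variable {ι κ α 𝕜 E : Type*} [Fintype ι] [Fintype κ] [NontriviallyNormedField 𝕜]
  [NormedAddCommGroup E] [NormedSpace 𝕜 E]

lemma isBigO_sum_mul_mul {l : Filter α} {A : α → Matrix ι κ 𝕜} {v : α → ι → 𝕜} {w : α → κ → 𝕜}
    (hA : ∀ i j, (fun x => A x i j) =O[l] fun _ => (1 : ℝ)) :
    (fun x => ∑ i, ∑ j, A x i j * v x i * w x j) =O[l] fun x => ‖v x‖ * ‖w x‖ := by
  refine IsBigO.fun_sum fun i _ => IsBigO.fun_sum fun j _ => ?_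
  have hv : (fun x => v x i) =O[l] fun x => ‖v x‖ :=
    IsBigO.of_norm_le fun x => norm_le_pi_norm (v x) i
  have hw : (fun x => w x j) =O[l] fun x => ‖w x‖ :=
    IsBigO.of_norm_le fun x => norm_le_pi_norm (w x) j
  simpa using ((hA i j).mul hv).mul hw

variable [DecidableEq ι] {A : E → Matrix ι ι 𝕜} {x : E} {n : WithTop ℕ∞}

lemma contDiffAt_matrix_det (hA : ∀ i j, ContDiffAt 𝕜 n (fun y => A y i j) x) :
    ContDiffAt 𝕜 n (fun y => (A y).det) x := by
  simp only [det_apply']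
  exact ContDiffAt.sum fun σ _ => contDiffAt_const.mul (contDiffAt_prod fun i _ => hA _ _)

lemma contDiffAt_matrix_inv_apply (hA : ∀ i j, ContDiffAt 𝕜 n (fun y => A y i j) x)
    (hdet : (A x).det ≠ 0) (i j : ι) : ContDiffAt 𝕜 n (fun y => (A y)⁻¹ i j) x := by
  simp only [inv_def, Ring.inverse_eq_inv', Matrix.smul_apply, smul_eq_mul, adjugate_apply]
  refine ((contDiffAt_matrix_det hA).inv hdet).mul (contDiffAt_matrix_det fun k l => ?_)
  rcases eq_or_ne k j with rfl | hkj
  · simpa only [updateRow_self] using contDiffAt_const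
  · simpa only [updateRow_ne hkj] using hA k l

end Matrix

lemma fderiv_apply_eq_euclGrad_dotProduct (V : Vec N → ℝ) (x v : Vec N) :
    fderiv ℝ V x v = euclGrad V x ⬝ᵥ v := by
  conv_lhs => rw [← Finset.univ_sum_single v, map_sum]
  refine Finset.sum_congr rfl fun i _ => ?_
  rw [← mul_one (v i), ← smul_eq_mul, Pi.single_smul, map_smul, smul_eq_mul, mul_comm, euclGrad,
    smul_eq_mul, mul_one]

namespace Setting

variable (S : Setting N) {x : Vec N}

lemma prod_eq_dotProduct (x v w : Vec N) : S.prod x v w = v ⬝ᵥ S.g x *ᵥ w := by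
  simp only [prod, gP, dotProduct, mulVec, Finset.mul_sum]
  exact Finset.sum_congr rfl fun i _ => Finset.sum_congr rfl fun j _ => by ring

lemma prod_comm (hx : x ∈ S.U) (v w : Vec N) : S.prod x v w = S.prod x w v := by
  have hsymm : (S.g x)ᵀ = S.g x := Matrix.ext fun i j => S.hgsymm x hx j i
  rw [prod_eq_dotProduct, prod_eq_dotProduct, dotProduct_mulVec, ← mulVec_transpose, hsymm,
    dotProduct_comm]

lemma prod_add_smul_left (x v w z : Vec N) (r : ℝ) :
    S.prod x (v + r • w) z = S.prod x v z + r * S.prod x w z := by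
  simp only [prod_eq_dotProduct, add_dotProduct, smul_dotProduct, smul_eq_mul]

lemma prod_add_smul_self (hx : x ∈ S.U) (v w : Vec N) (r : ℝ) :
    S.prod x (v + r • w) (v + r • w) =
      S.prod x v v + 2 * r * S.prod x w v + r ^ 2 * S.prod x w w := by
  rw [prod_add_smul_left, S.prod_comm hx v, S.prod_comm hx w, prod_add_smul_left,
    prod_add_smul_left, S.prod_comm hx v w]
  ring

lemma prod_smul_smul (x v : Vec N) (r : ℝ) : S.prod x (r • v) (r • v) = r ^ 2 * S.prod x v v := by
  simp only [prod_eq_dotProduct, mulVec_smul, dotProduct_smul, smul_dotProduct, smul_eq_mul]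
  ring

lemma det_g_ne_zero (hx : x ∈ S.U) : (S.g x).det ≠ 0 := by
  intro hdet
  obtain ⟨v, hv, hgv⟩ := exists_mulVec_eq_zero_iff.2 hdet
  refine (S.hgpos x hx v hv).ne' ?_
  rw [← prod, prod_eq_dotProduct, hgv, dotProduct_zero]

lemma prod_grad (hx : x ∈ S.U) (w : Vec N) :
    S.prod x (S.grad x) w = fderiv ℝ S.V x w := by
  rw [S.prod_comm hx, prod_eq_dotProduct, grad, mulVec_mulVec,
    mul_nonsing_inv _ (isUnit_iff_ne_zero.2 (S.det_g_ne_zero hx)), one_mulVec, dotProduct_comm,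
    fderiv_apply_eq_euclGrad_dotProduct]

lemma contDiffAt_g (hx : x ∈ S.U) (i j : Fin N) : ContDiffAt ℝ 3 (fun y => S.g y i j) x :=
  (S.hgC i j).contDiffAt (S.hU.mem_nhds hx)

lemma contDiffAt_inv_g (hx : x ∈ S.U) (i j : Fin N) :
    ContDiffAt ℝ 3 (fun y => (S.g y)⁻¹ i j) x :=
  contDiffAt_matrix_inv_apply (S.contDiffAt_g hx) (S.det_g_ne_zero hx) i j

lemma contDiffAt_V (hx : x ∈ S.U) : ContDiffAt ℝ 2 S.V x :=
  S.hVC.contDiffAt (S.hU.mem_nhds hx)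

lemma differentiableAt_V (hx : x ∈ S.U) : DifferentiableAt ℝ S.V x :=
  (S.contDiffAt_V hx).differentiableAt two_ne_zero

lemma contDiffAt_fderiv_V (hx : x ∈ S.U) : ContDiffAt ℝ 1 (fderiv ℝ S.V) x :=
  (S.contDiffAt_V hx).fderiv_right (by norm_num)

lemma contDiffAt_grad (hx : x ∈ S.U) : ContDiffAt ℝ 1 S.grad x := by
  refine contDiffAt_pi.2 fun k => ?_
  simp only [grad, mulVec, dotProduct]
  refine ContDiffAt.sum fun j _ => ?_
  exact ((S.contDiffAt_inv_g hx k j).of_le (by norm_num)).mul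
    ((S.contDiffAt_fderiv_V hx).clm_apply contDiffAt_const)

lemma continuousAt_christoffel (hx : x ∈ S.U) (k i j : Fin N) :
    ContinuousAt (fun y => S.christoffel y k i j) x := by
  have hdg : ∀ i j l, ContinuousAt
      (fun y => fderiv ℝ (fun z => S.g z i j) y (Pi.single l 1)) x := fun i j l =>
    ((S.contDiffAt_g hx i j).continuousAt_fderiv (by norm_num)).clm_apply continuousAt_const
  simp only [christoffel]
  refine continuousAt_const.mul (tendsto_finsetSum _ fun l _ => ?_)
  exact (S.contDiffAt_inv_g hx k l).continuousAt.mul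
    (((hdg _ _ _).add (hdg _ _ _)).sub (hdg _ _ _))

lemma continuousAt_prod_self (hx : x ∈ S.U) (v : Vec N) :
    ContinuousAt (fun z : Vec N × Vec N => S.prod z.1 z.2 z.2) (x, v) := by
  simp only [prod, gP]
  refine tendsto_finsetSum _ fun i _ => tendsto_finsetSum _ fun j _ => ?_
  have hg : ContinuousAt (fun z : Vec N × Vec N => S.g z.1 i j) (x, v) :=
    ContinuousAt.comp (g := fun y => S.g y i j) (f := Prod.fst)
      (S.contDiffAt_g hx i j).continuousAt continuousAt_fst
  exact (hg.mul (by fun_prop)).mul (by fun_prop)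

lemma exists_eventually_mul_norm_sq_le_prod (hx : x ∈ S.U) :
    ∃ c > 0, ∀ᶠ y in 𝓝 x, ∀ v, c * ‖v‖ ^ 2 ≤ S.prod y v v := by
  have hsphere : IsCompact (Metric.sphere (0 : Vec N) 1) := isCompact_sphere 0 1
  have hcont : ContinuousOn (fun v => S.prod x v v) (Metric.sphere 0 1) := fun v _ =>
    ((S.continuousAt_prod_self hx v).comp (f := fun v => (x, v)) (by fun_prop)).continuousWithinAt
  obtain ⟨c, hc, hcle⟩ := hsphere.exists_forall_le' hcont fun v hv =>
    S.hgpos x hx v (ne_zero_of_mem_unit_sphere ⟨v, hv⟩)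
  refine ⟨c / 2, half_pos hc, ?_⟩
  have hnear : ∀ᶠ y in 𝓝 x, ∀ v ∈ Metric.sphere (0 : Vec N) 1, c / 2 < S.prod y v v :=
    hsphere.eventually_forall_of_forall_eventually fun v hv =>
      (S.continuousAt_prod_self hx v).eventually_const_lt ((half_lt_self hc).trans_le (hcle v hv))
  filter_upwards [hnear] with y hy v
  rcases eq_or_ne v 0 with rfl | hv
  · simp [prod_eq_dotProduct]
  have hunit : c / 2 ≤ S.prod y (‖v‖⁻¹ • v) (‖v‖⁻¹ • v) :=
    (hy _ (by simp [norm_smul, hv])).le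
  rwa [prod_smul_smul, inv_pow, inv_mul_eq_div, le_div_iff₀ (by positivity)] at hunit

variable {S} {α : Type*} {l : Filter α} {q : α → Vec N}

lemma isBigO_norm_sq_prod (hx : x ∈ S.U) (hq : Tendsto q l (𝓝 x)) (v : α → Vec N) :
    (fun t => ‖v t‖ ^ 2) =O[l] fun t => S.prod (q t) (v t) (v t) := by
  obtain ⟨c, hc, hle⟩ := S.exists_eventually_mul_norm_sq_le_prod hx
  refine IsBigO.of_bound c⁻¹ ?_
  filter_upwards [hq.eventually hle] with t ht
  rw [Real.norm_of_nonneg (by positivity), inv_mul_eq_div, le_div_iff₀' hc]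
  exact (ht _).trans (le_abs_self _)

lemma isBigO_prod (hx : x ∈ S.U) (hq : Tendsto q l (𝓝 x)) (v w : α → Vec N) :
    (fun t => S.prod (q t) (v t) (w t)) =O[l] fun t => ‖v t‖ * ‖w t‖ :=
  isBigO_sum_mul_mul fun i j => ((S.contDiffAt_g hx i j).continuousAt.tendsto.comp hq).isBigO_one ℝ

variable (S)

/-- The vector `Γ(v, w)` with coordinates `Γ^k_{ij} v^i w^j`, by which the covariant derivative
along a curve differs from the coordinate derivative. -/
def christoffelVec (x v w : Vec N) : Vec N :=
  fun k => ∑ i, ∑ j, S.christoffel x k i j * v i * w j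

lemma covD_eq_add_christoffelVec (q q' ξ ξ' : ℝ → Vec N) (t : ℝ) :
    S.covD q q' ξ ξ' t = ξ' t + S.christoffelVec (q t) (q' t) (ξ t) := rfl

variable {S} in
lemma isBigO_christoffelVec (hx : x ∈ S.U) (hq : Tendsto q l (𝓝 x)) (v w : α → Vec N) :
    (fun t => S.christoffelVec (q t) (v t) (w t)) =O[l] fun t => ‖v t‖ * ‖w t‖ :=
  isBigO_pi.2 fun k => isBigO_sum_mul_mul fun i j =>
    ((S.continuousAt_christoffel hx k i j).tendsto.comp hq).isBigO_one ℝ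

/-- The squared norm `|∇V|²`. -/
def gradSq (x : Vec N) : ℝ := fderiv ℝ S.V x (S.grad x)

lemma prod_grad_self (hx : x ∈ S.U) : S.prod x (S.grad x) (S.grad x) = S.gradSq x :=
  S.prod_grad hx _

lemma contDiffAt_gradSq (hx : x ∈ S.U) : ContDiffAt ℝ 1 S.gradSq x :=
  (S.contDiffAt_fderiv_V hx).clm_apply (S.contDiffAt_grad hx)

lemma gradSq_pos (h : S.V x = S.E) : 0 < S.gradSq x := by
  have hx : x ∈ S.U := S.hsub h.le
  rw [← S.prod_grad_self hx]
  refine S.hgpos x hx _ fun hgrad => S.hreg x h (funext fun i => ?_)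
  rw [euclGrad, ← S.prod_grad hx, hgrad, prod_eq_dotProduct, zero_dotProduct, Pi.zero_apply]

/-- The Hessian quadratic form `v ↦ (∇dV)(v, v)`, in coordinates. -/
def hess (x v : Vec N) : ℝ :=
  fderiv ℝ (fderiv ℝ S.V) x v v - fderiv ℝ S.V x (S.christoffelVec x v v)

variable {S} in
lemma isBigO_hess (hx : x ∈ S.U) (hq : Tendsto q l (𝓝 x)) (v : α → Vec N) :
    (fun t => S.hess (q t) (v t)) =O[l] fun t => ‖v t‖ ^ 2 := by
  have hv : v =O[l] fun t => ‖v t‖ := (isBigO_refl v l).norm_right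
  have hD : (fun t => fderiv ℝ S.V (q t)) =O[l] fun _ => (1 : ℝ) :=
    ((S.contDiffAt_fderiv_V hx).continuousAt.tendsto.comp hq).isBigO_one ℝ
  have hDD : (fun t => fderiv ℝ (fderiv ℝ S.V) (q t)) =O[l] fun _ => (1 : ℝ) :=
    (((S.contDiffAt_fderiv_V hx).continuousAt_fderiv one_ne_zero).tendsto.comp hq).isBigO_one ℝ
  have hΓ : (fun t => fderiv ℝ S.V (q t) (S.christoffelVec (q t) (v t) (v t))) =O[l]
      fun t => ‖v t‖ ^ 2 := by
    simpa [sq] using isBigO_clm_apply hD (isBigO_christoffelVec hx hq v v)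
  have hDDv : (fun t => fderiv ℝ (fderiv ℝ S.V) (q t) (v t) (v t)) =O[l] fun t => ‖v t‖ ^ 2 := by
    simpa [sq] using isBigO_clm_apply (isBigO_clm_apply hDD hv) hv
  exact hDDv.sub hΓ

/-- The energy gap `φ = E - V` along `γ`, i.e. the kinetic energy of the motion with
trajectory `γ`. -/
def energyGap (γ : ℝ → Vec N) (t : ℝ) : ℝ := S.E - S.V (γ t)

/-- The derivative `h = φ φ'` of the energy gap `φ` in Newtonian time. Expanding `φ'` makes
`h 0 = 0` when `γ` starts on the boundary, where `γ` need not be differentiable. -/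
def gapRate (γ : ℝ → Vec N) (t : ℝ) : ℝ := -(S.energyGap γ t * fderiv ℝ S.V (γ t) (deriv γ t))

/-- The second derivative `φ h'` of the energy gap `φ` in Newtonian time, as given by the geodesic
equation. -/
def gapAccel (γ : ℝ → Vec N) (t : ℝ) : ℝ :=
  S.gradSq (γ t) - S.energyGap γ t ^ 2 * S.hess (γ t) (deriv γ t)

/-- The component of `γ'` tangent to the level sets of `V`. -/
def tangentialVelocity (γ : ℝ → Vec N) (t : ℝ) : Vec N :=
  deriv γ t + (S.gapRate γ t / (S.energyGap γ t * S.gradSq (γ t))) • S.grad (γ t)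

variable {S} {γ : ℝ → Vec N} {t : ℝ}

lemma gapRate_div_energyGap (hφ : S.energyGap γ t ≠ 0) :
    S.gapRate γ t / S.energyGap γ t = -fderiv ℝ S.V (γ t) (deriv γ t) := by
  rw [gapRate, ← mul_neg, mul_div_cancel_left₀ _ hφ]

lemma hasDerivAt_energyGap (hU : γ t ∈ S.U) (hγ : DifferentiableAt ℝ γ t) :
    HasDerivAt (S.energyGap γ) (-fderiv ℝ S.V (γ t) (deriv γ t)) t :=
  ((S.differentiableAt_V hU).hasFDerivAt.comp_hasDerivAt t hγ.hasDerivAt).const_sub S.E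

lemma energyGap_mul_fderiv_covD (hU : γ t ∈ S.U)
    (hgeo : S.GeoEqAt γ (deriv γ) (deriv (deriv γ)) t) :
    S.energyGap γ t * fderiv ℝ S.V (γ t) (S.covD γ (deriv γ) (deriv γ) (deriv (deriv γ)) t) =
      fderiv ℝ S.V (γ t) (deriv γ t) ^ 2
        - 1 / 2 * S.prod (γ t) (deriv γ t) (deriv γ t) * S.gradSq (γ t) := by
  have hvec : S.energyGap γ t • S.covD γ (deriv γ) (deriv γ) (deriv (deriv γ)) t
      - fderiv ℝ S.V (γ t) (deriv γ t) • deriv γ t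
      + (1 / 2 * S.prod (γ t) (deriv γ t) (deriv γ t)) • S.grad (γ t) = 0 := by
    rw [← S.prod_grad hU]
    exact funext hgeo
  have happly := congrArg (fderiv ℝ S.V (γ t)) hvec
  simp only [map_add, map_sub, map_smul, smul_eq_mul, map_zero] at happly
  rw [gradSq]
  linear_combination happly

lemma hasDerivAt_gapRate (hU : γ t ∈ S.U) (hγ : ContDiffAt ℝ 2 γ t)
    (hgeo : S.GeoEqAt γ (deriv γ) (deriv (deriv γ)) t)
    (harc : 1 / 2 * S.prod (γ t) (deriv γ t) (deriv γ t) * S.energyGap γ t = 1) :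
    HasDerivAt (S.gapRate γ) (S.gapAccel γ t / S.energyGap γ t) t := by
  have hφ : S.energyGap γ t ≠ 0 := right_ne_zero_of_mul_eq_one harc
  have hγ' : DifferentiableAt ℝ γ t := hγ.differentiableAt two_ne_zero
  have hγ'' : HasDerivAt (deriv γ) (deriv (deriv γ) t) t :=
    ((hγ.derivWithin (m := 1) (by norm_num)).differentiableAt one_ne_zero).hasDerivAt
  have hdV : HasDerivAt (fun u => fderiv ℝ S.V (γ u))
      (fderiv ℝ (fderiv ℝ S.V) (γ t) (deriv γ t)) t :=
    ((S.contDiffAt_fderiv_V hU).differentiableAt one_ne_zero).hasFDerivAt.comp_hasDerivAt t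
      hγ'.hasDerivAt
  refine ((hasDerivAt_energyGap hU hγ').mul (hdV.clm_apply hγ'')).neg.congr_deriv ?_
  have hcov := energyGap_mul_fderiv_covD hU hgeo
  rw [covD_eq_add_christoffelVec, map_add] at hcov
  rw [eq_div_iff hφ, gapAccel, hess]
  linear_combination S.gradSq (γ t) * harc - S.energyGap γ t * hcov

namespace IsBdryGeo

variable {a : ℝ} (hγ : S.IsBdryGeo γ a)
include hγ

lemma mem_U {t : ℝ} (ht : t ∈ Icc 0 a) : γ t ∈ S.U := by
  obtain ⟨-, -, -, hV0, hV, -, -⟩ := hγ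
  rcases ht.1.eq_or_lt with rfl | ht0
  · exact S.hsub hV0.le
  · exact S.hsub (hV t ⟨ht0, ht.2⟩).le

lemma zero_mem_U : γ 0 ∈ S.U := hγ.mem_U (left_mem_Icc.2 hγ.1.le)

lemma continuousWithinAt_zero : ContinuousWithinAt γ (Ioi 0) 0 := by
  have hcont := (hγ.2.1 0 (left_mem_Icc.2 hγ.1.le)).mono Ioc_subset_Icc_self
  rwa [ContinuousWithinAt, nhdsWithin_Ioc_eq_nhdsGT hγ.1] at hcont

lemma energyGap_zero : S.energyGap γ 0 = 0 := sub_eq_zero.2 hγ.2.2.2.1.symm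

lemma gapRate_zero : S.gapRate γ 0 = 0 := by rw [gapRate, hγ.energyGap_zero, zero_mul, neg_zero]

lemma eventually_mem_Ioc : ∀ᶠ t in 𝓝[>] 0, t ∈ Ioc 0 a := Ioc_mem_nhdsGT hγ.1

lemma eventually_mem_U : ∀ᶠ t in 𝓝[>] 0, γ t ∈ S.U :=
  hγ.eventually_mem_Ioc.mono fun _ ht => hγ.mem_U (Ioc_subset_Icc_self ht)

lemma eventually_energyGap_pos : ∀ᶠ t in 𝓝[>] 0, 0 < S.energyGap γ t :=
  hγ.eventually_mem_Ioc.mono fun t ht => sub_pos.2 (hγ.2.2.2.2.1 t ht)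

lemma eventually_prod_deriv_self :
    ∀ᶠ t in 𝓝[>] 0, S.prod (γ t) (deriv γ t) (deriv γ t) = 2 / S.energyGap γ t := by
  filter_upwards [hγ.eventually_mem_Ioc, hγ.eventually_energyGap_pos] with t ht hφ
  rw [eq_div_iff hφ.ne']
  have harc : 1 / 2 * S.prod (γ t) (deriv γ t) (deriv γ t) * S.energyGap γ t = 1 :=
    hγ.2.2.2.2.2.2 t ht
  linarith

lemma eventually_hasDerivAt : ∀ᶠ t in 𝓝[>] 0, HasDerivAt γ (deriv γ t) t :=
  hγ.eventually_mem_Ioc.mono fun t ht =>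
    ((hγ.2.2.1 t ht).differentiableAt two_ne_zero).hasDerivAt

lemma eventually_hasDerivAt_energyGap :
    ∀ᶠ t in 𝓝[>] 0, HasDerivAt (S.energyGap γ) (S.gapRate γ t / S.energyGap γ t) t := by
  filter_upwards [hγ.eventually_mem_U, hγ.eventually_energyGap_pos, hγ.eventually_hasDerivAt]
    with t hU hφ ht
  rw [gapRate_div_energyGap hφ.ne']
  exact Setting.hasDerivAt_energyGap hU ht.differentiableAt

lemma eventually_hasDerivAt_gapRate :
    ∀ᶠ t in 𝓝[>] 0, HasDerivAt (S.gapRate γ) (S.gapAccel γ t / S.energyGap γ t) t := by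
  obtain ⟨-, -, hC2, -, -, hgeo, harc⟩ := id hγ
  filter_upwards [hγ.eventually_mem_Ioc, hγ.eventually_mem_U] with t ht hU
  exact Setting.hasDerivAt_gapRate hU (hC2 t ht) (hgeo t ht) (harc t ht)

lemma continuousWithinAt_energyGap : ContinuousWithinAt (S.energyGap γ) (Ioi 0) 0 :=
  continuousWithinAt_const.sub
    ((S.differentiableAt_V hγ.zero_mem_U).continuousAt.comp_continuousWithinAt
      hγ.continuousWithinAt_zero)

lemma tendsto_energyGap : Tendsto (S.energyGap γ) (𝓝[>] 0) (𝓝 0) := by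
  simpa only [ContinuousWithinAt, hγ.energyGap_zero] using hγ.continuousWithinAt_energyGap

lemma isBigO_norm_deriv_sq :
    (fun t => ‖deriv γ t‖ ^ 2) =O[𝓝[>] 0] fun t => (S.energyGap γ t)⁻¹ := by
  have hprod : (fun t => S.prod (γ t) (deriv γ t) (deriv γ t)) =O[𝓝[>] 0]
      fun t => (S.energyGap γ t)⁻¹ := by
    refine IsBigO.of_bound 2 (hγ.eventually_prod_deriv_self.mono fun t ht => ?_)
    rw [ht, div_eq_mul_inv, norm_mul, Real.norm_two]
  exact (isBigO_norm_sq_prod hγ.zero_mem_U hγ.continuousWithinAt_zero _).trans hprod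

lemma isBigO_energyGap_sq_mul_norm_deriv_sq :
    (fun t => S.energyGap γ t ^ 2 * ‖deriv γ t‖ ^ 2) =O[𝓝[>] 0] S.energyGap γ := by
  refine ((isBigO_refl _ _).mul hγ.isBigO_norm_deriv_sq).congr' .rfl ?_
  filter_upwards [hγ.eventually_energyGap_pos] with t hφ
  field_simp

lemma isBigO_fderiv_V : (fun t => fderiv ℝ S.V (γ t)) =O[𝓝[>] 0] fun _ => (1 : ℝ) :=
  ((S.contDiffAt_fderiv_V hγ.zero_mem_U).continuousAt.tendsto.comp
    hγ.continuousWithinAt_zero).isBigO_one ℝ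

lemma isBigO_gapRate_sq : (fun t => S.gapRate γ t ^ 2) =O[𝓝[>] 0] S.energyGap γ := by
  have hrate : S.gapRate γ =O[𝓝[>] 0] fun t => S.energyGap γ t * ‖deriv γ t‖ := by
    have hdV := isBigO_clm_apply hγ.isBigO_fderiv_V (isBigO_refl (deriv γ) (𝓝[>] 0)).norm_right
    simp only [one_mul] at hdV
    exact ((isBigO_refl _ _).mul hdV).neg_left
  refine (hrate.pow 2).trans ?_
  simpa only [mul_pow] using hγ.isBigO_energyGap_sq_mul_norm_deriv_sq

lemma tendsto_gapRate : Tendsto (S.gapRate γ) (𝓝[>] 0) (𝓝 0) := by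
  have hsq := hγ.isBigO_gapRate_sq.trans_tendsto hγ.tendsto_energyGap
  rw [tendsto_zero_iff_abs_tendsto_zero]
  simpa [Function.comp_def, Real.sqrt_sq_eq_abs] using hsq.sqrt

lemma continuousWithinAt_gapRate : ContinuousWithinAt (S.gapRate γ) (Ioi 0) 0 := by
  simpa only [ContinuousWithinAt, hγ.gapRate_zero] using hγ.tendsto_gapRate

lemma isBigO_gradSq_sub_gapAccel :
    (fun t => S.gradSq (γ t) - S.gapAccel γ t) =O[𝓝[>] 0] S.energyGap γ := by
  have hhess := (isBigO_refl (fun t => S.energyGap γ t ^ 2) (𝓝[>] 0)).mul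
    (isBigO_hess hγ.zero_mem_U hγ.continuousWithinAt_zero (deriv γ))
  simpa only [gapAccel, sub_sub_cancel] using
    hhess.trans hγ.isBigO_energyGap_sq_mul_norm_deriv_sq

lemma tendsto_gradSq : Tendsto (fun t => S.gradSq (γ t)) (𝓝[>] 0) (𝓝 (S.gradSq (γ 0))) :=
  (S.contDiffAt_gradSq hγ.zero_mem_U).continuousAt.tendsto.comp hγ.continuousWithinAt_zero

lemma gradSq_zero_pos : 0 < S.gradSq (γ 0) := S.gradSq_pos hγ.2.2.2.1

lemma eventually_gradSq_pos : ∀ᶠ t in 𝓝[>] 0, 0 < S.gradSq (γ t) :=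
  hγ.tendsto_gradSq.eventually_const_lt hγ.gradSq_zero_pos

lemma tendsto_gapAccel : Tendsto (S.gapAccel γ) (𝓝[>] 0) (𝓝 (S.gradSq (γ 0))) := by
  simpa using hγ.tendsto_gradSq.sub
    (hγ.isBigO_gradSq_sub_gapAccel.trans_tendsto hγ.tendsto_energyGap)

lemma eventually_gapAccel_pos : ∀ᶠ t in 𝓝[>] 0, 0 < S.gapAccel γ t :=
  hγ.tendsto_gapAccel.eventually_const_lt hγ.gradSq_zero_pos

lemma isBigO_one_gapAccel : (fun _ => (1 : ℝ)) =O[𝓝[>] 0] S.gapAccel γ := by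
  refine (isBigO_const_left_iff_pos_le_norm one_ne_zero).2
    ⟨_, half_pos hγ.gradSq_zero_pos, ?_⟩
  filter_upwards [hγ.tendsto_gapAccel.eventually_const_le (half_lt_self hγ.gradSq_zero_pos)]
    with t ht
  exact ht.trans (le_abs_self _)

lemma eventually_gapRate_nonneg : ∀ᶠ t in 𝓝[>] 0, 0 ≤ S.gapRate γ t := by
  have hle := eventually_norm_sub_le_of_deriv (f := fun _ => (0 : ℝ)) (f' := 0)
    continuousWithinAt_const hγ.continuousWithinAt_gapRate
    (.of_forall fun t => hasDerivAt_const t 0) hγ.eventually_hasDerivAt_gapRate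
    (by
      filter_upwards [hγ.eventually_energyGap_pos, hγ.eventually_gapAccel_pos] with t hφ hacc
      rw [Pi.zero_apply, norm_zero]
      positivity)
  filter_upwards [hle] with t ht
  simpa [hγ.gapRate_zero] using ht

lemma isBigO_energyGap_gapRate_sq : S.energyGap γ =O[𝓝[>] 0] fun t => S.gapRate γ t ^ 2 := by
  have hderiv : (fun t => S.gapRate γ t / S.energyGap γ t) =O[𝓝[>] 0]
      fun t => 2 * S.gapRate γ t ^ 1 * (S.gapAccel γ t / S.energyGap γ t) := by
    have hmul := (isBigO_refl (fun t => S.gapRate γ t / S.energyGap γ t) (𝓝[>] 0)).mul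
      hγ.isBigO_one_gapAccel
    refine ((hmul.const_mul_right (c := 2) two_ne_zero)).congr (fun t => mul_one _) fun t => ?_
    ring
  have hsub := isBigO_sub_of_deriv hγ.continuousWithinAt_energyGap
    (hγ.continuousWithinAt_gapRate.pow 2) hγ.eventually_hasDerivAt_energyGap
    (hγ.eventually_hasDerivAt_gapRate.mono fun t ht => ht.pow 2)
    (by
      filter_upwards [hγ.eventually_energyGap_pos, hγ.eventually_gapAccel_pos,
        hγ.eventually_gapRate_nonneg] with t hφ hacc hh
      positivity) hderiv
  simpa [hγ.energyGap_zero, hγ.gapRate_zero] using hsub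

lemma eventually_gapRate_div_energyGap_nonneg :
    ∀ᶠ t in 𝓝[>] 0, 0 ≤ S.gapRate γ t / S.energyGap γ t := by
  filter_upwards [hγ.eventually_energyGap_pos, hγ.eventually_gapRate_nonneg] with t hφ hh
  positivity

lemma isBigO_deriv :
    deriv γ =O[𝓝[>] 0] fun t => S.gapRate γ t / S.energyGap γ t := by
  refine IsBigO.of_norm_left (IsBigO.of_pow two_ne_zero (hγ.isBigO_norm_deriv_sq.trans ?_))
  refine (hγ.isBigO_energyGap_gapRate_sq.mul
    (isBigO_refl (fun t => (S.energyGap γ t ^ 2)⁻¹) _)).congr' ?_ (.of_forall fun t => ?_)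
  · filter_upwards [hγ.eventually_energyGap_pos] with t hφ
    field_simp
  · rw [Pi.pow_apply, div_pow, div_eq_mul_inv]

lemma isBigO_sub_zero : (fun t => γ t - γ 0) =O[𝓝[>] 0] S.energyGap γ := by
  simpa only [hγ.energyGap_zero, sub_zero] using
    isBigO_sub_of_deriv hγ.continuousWithinAt_zero hγ.continuousWithinAt_energyGap
      hγ.eventually_hasDerivAt hγ.eventually_hasDerivAt_energyGap
      hγ.eventually_gapRate_div_energyGap_nonneg hγ.isBigO_deriv

lemma isBigO_gradSq_sub :
    (fun t => S.gradSq (γ t) - S.gradSq (γ 0)) =O[𝓝[>] 0] S.energyGap γ :=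
  (((S.contDiffAt_gradSq hγ.zero_mem_U).differentiableAt one_ne_zero).isBigO_sub.comp_tendsto
    hγ.continuousWithinAt_zero).trans hγ.isBigO_sub_zero

/- With `m = |∇V(γ 0)|²`, compare the derivatives of `h² - 2mφ` and `φ²`. -/
lemma isBigO_two_mul_energyGap_mul_gradSq_sub :
    (fun t => 2 * S.energyGap γ t * S.gradSq (γ t) - S.gapRate γ t ^ 2) =O[𝓝[>] 0]
      fun t => S.energyGap γ t ^ 2 := by
  have hderiv : (fun t => 2 * S.gapRate γ t ^ 1 * (S.gapAccel γ t / S.energyGap γ t)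
      - 2 * S.gradSq (γ 0) * (S.gapRate γ t / S.energyGap γ t)) =O[𝓝[>] 0]
      fun t => 2 * S.energyGap γ t ^ 1 * (S.gapRate γ t / S.energyGap γ t) := by
    have hacc : (fun t => S.gapAccel γ t - S.gradSq (γ 0)) =O[𝓝[>] 0] S.energyGap γ := by
      simpa using hγ.isBigO_gradSq_sub.sub hγ.isBigO_gradSq_sub_gapAccel
    refine (hacc.mul (isBigO_refl (fun t => 2 * (S.gapRate γ t / S.energyGap γ t)) _)).congr
      (fun t => ?_) fun t => ?_ <;> ring
  have hsub := isBigO_sub_of_deriv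
    ((hγ.continuousWithinAt_gapRate.pow 2).sub (hγ.continuousWithinAt_energyGap.const_mul _))
    (hγ.continuousWithinAt_energyGap.pow 2)
    (by
      filter_upwards [hγ.eventually_hasDerivAt_energyGap, hγ.eventually_hasDerivAt_gapRate]
        with t hφ hh
      exact (hh.pow 2).sub (hφ.const_mul _))
    (hγ.eventually_hasDerivAt_energyGap.mono fun t ht => ht.pow 2)
    (by
      filter_upwards [hγ.eventually_energyGap_pos, hγ.eventually_gapRate_nonneg] with t hφ hh
      positivity) hderiv
  have hconst : (fun t => S.gapRate γ t ^ 2 - 2 * S.gradSq (γ 0) * S.energyGap γ t) =O[𝓝[>] 0]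
      fun t => S.energyGap γ t ^ 2 := by
    simpa [hγ.energyGap_zero, hγ.gapRate_zero] using hsub
  have hvar : (fun t => 2 * (S.energyGap γ t * (S.gradSq (γ t) - S.gradSq (γ 0)))) =O[𝓝[>] 0]
      fun t => S.energyGap γ t ^ 2 := by
    simpa only [sq] using
      ((isBigO_refl (S.energyGap γ) _).mul hγ.isBigO_gradSq_sub).const_mul_left 2
  refine (hvar.sub hconst).congr_left fun t => ?_
  ring

lemma isLittleO_energyGap_gapRate : S.energyGap γ =o[𝓝[>] 0] S.gapRate γ := by
  refine hγ.isBigO_energyGap_gapRate_sq.trans_isLittleO ?_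
  simpa only [sq, one_mul] using
    ((isLittleO_one_iff ℝ).2 hγ.tendsto_gapRate).mul_isBigO (isBigO_refl (S.gapRate γ) _)

lemma isBigO_inv_gradSq : (fun t => (S.gradSq (γ t))⁻¹) =O[𝓝[>] 0] fun _ => (1 : ℝ) :=
  (hγ.tendsto_gradSq.inv₀ hγ.gradSq_zero_pos.ne').isBigO_one ℝ

lemma eventually_prod_tangentialVelocity_self :
    ∀ᶠ t in 𝓝[>] 0, S.prod (γ t) (S.tangentialVelocity γ t) (S.tangentialVelocity γ t) =
      (2 * S.energyGap γ t * S.gradSq (γ t) - S.gapRate γ t ^ 2)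
        * (S.energyGap γ t ^ 2)⁻¹ * (S.gradSq (γ t))⁻¹ := by
  filter_upwards [hγ.eventually_mem_U, hγ.eventually_energyGap_pos, hγ.eventually_gradSq_pos,
    hγ.eventually_prod_deriv_self] with t hU hφ hM hprod
  have hdV : S.prod (γ t) (S.grad (γ t)) (deriv γ t) = -(S.gapRate γ t / S.energyGap γ t) := by
    rw [S.prod_grad hU, gapRate_div_energyGap hφ.ne', neg_neg]
  rw [tangentialVelocity, S.prod_add_smul_self hU, hprod, hdV, S.prod_grad_self hU]
  field_simp
  ring

lemma isBigO_tangentialVelocity : S.tangentialVelocity γ =O[𝓝[>] 0] fun _ => (1 : ℝ) := by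
  have hself : (fun t => S.prod (γ t) (S.tangentialVelocity γ t) (S.tangentialVelocity γ t))
      =O[𝓝[>] 0] fun _ => (1 : ℝ) := by
    refine ((hγ.isBigO_two_mul_energyGap_mul_gradSq_sub.mul (isBigO_refl
      (fun t => (S.energyGap γ t ^ 2)⁻¹) _)).mul hγ.isBigO_inv_gradSq).congr'
      (hγ.eventually_prod_tangentialVelocity_self.mono fun t ht => ht.symm) ?_
    filter_upwards [hγ.eventually_energyGap_pos] with t hφ
    field_simp
  refine IsBigO.of_norm_left (IsBigO.of_pow two_ne_zero ?_)
  simpa only [Pi.pow_def, one_pow] using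
    (isBigO_norm_sq_prod hγ.zero_mem_U hγ.continuousWithinAt_zero _).trans hself

end IsBdryGeo

lemma prod_deriv_eq (hU : γ t ∈ S.U) (w : Vec N) :
    S.prod (γ t) (deriv γ t) w = S.prod (γ t) (S.tangentialVelocity γ t) w
      - S.gapRate γ t / (S.energyGap γ t * S.gradSq (γ t)) * fderiv ℝ S.V (γ t) w := by
  rw [tangentialVelocity, prod_add_smul_left, S.prod_grad hU, add_sub_cancel_right]

namespace InY

variable {a s : ℝ} {W : Vec N} {ξ : ℝ → Vec N} (hξ : S.InY γ s W ξ) (hs : 0 < s)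
include hξ hs

lemma continuousWithinAt_zero : ContinuousWithinAt ξ (Ioi 0) 0 := by
  have hcont := (hξ.1.1 0 (left_mem_Icc.2 hs.le)).mono Ioc_subset_Icc_self
  rwa [ContinuousWithinAt, nhdsWithin_Ioc_eq_nhdsGT hs] at hcont

variable (hγ : S.IsBdryGeo γ a)
include hγ

lemma isBigO_energyGap_mul_norm_christoffelVec_sq :
    (fun t => S.energyGap γ t * ‖S.christoffelVec (γ t) (deriv γ t) (ξ t)‖ ^ 2) =O[𝓝[>] 0]
      fun _ => (1 : ℝ) := by
  have hΓ : (fun t => ‖S.christoffelVec (γ t) (deriv γ t) (ξ t)‖) =O[𝓝[>] 0]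
      fun t => ‖deriv γ t‖ := by
    simpa using (isBigO_christoffelVec hγ.zero_mem_U hγ.continuousWithinAt_zero
      (deriv γ) ξ).norm_left.trans ((isBigO_refl (fun t => ‖deriv γ t‖) _).mul
        ((hξ.continuousWithinAt_zero hs).norm.isBigO_one ℝ))
  refine ((isBigO_refl (S.energyGap γ) _).mul
    ((hΓ.pow 2).trans hγ.isBigO_norm_deriv_sq)).congr' .rfl ?_
  filter_upwards [hγ.eventually_energyGap_pos] with t hφ
  exact mul_inv_cancel₀ hφ.ne'

lemma isBigO_energyGap_mul_norm_deriv_sq :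
    (fun t => S.energyGap γ t * ‖deriv ξ t‖ ^ 2) =O[𝓝[>] 0] fun t =>
      ‖S.energyGap γ t * S.prod (γ t) (S.covD γ (deriv γ) ξ (deriv ξ) t)
        (S.covD γ (deriv γ) ξ (deriv ξ) t)‖ + ‖(1 : ℝ)‖ := by
  have hderiv : (fun t => ‖deriv ξ t‖ ^ 2) =O[𝓝[>] 0] fun t =>
      ‖S.covD γ (deriv γ) ξ (deriv ξ) t‖ ^ 2
        + ‖S.christoffelVec (γ t) (deriv γ t) (ξ t)‖ ^ 2 := by
    simpa only [covD_eq_add_christoffelVec, norm_neg, add_neg_cancel_right] using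
      isBigO_norm_add_sq (𝓝[>] 0) (S.covD γ (deriv γ) ξ (deriv ξ))
        fun t => -S.christoffelVec (γ t) (deriv γ t) (ξ t)
  have hcov := (isBigO_refl (S.energyGap γ) (𝓝[>] 0)).mul
    (isBigO_norm_sq_prod hγ.zero_mem_U hγ.continuousWithinAt_zero
      (S.covD γ (deriv γ) ξ (deriv ξ)))
  refine ((isBigO_refl (S.energyGap γ) _).mul hderiv).trans ?_
  simpa only [mul_add] using
    hcov.add_add (hξ.isBigO_energyGap_mul_norm_christoffelVec_sq hs hγ)

/- Cauchy–Schwarz with weight `φ⁻¹`, which is dominated by `h'`. -/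
lemma isLittleO_norm_sub_zero_sq : (fun t => ‖ξ t - ξ 0‖ ^ 2) =o[𝓝[>] 0] S.gapRate γ := by
  obtain ⟨⟨-, hint, hprim⟩, henergy, -, -⟩ := id hξ
  have hle : (fun t => ‖deriv ξ t‖ ^ 2) =O[𝓝[>] 0] fun t => S.gapAccel γ t / S.energyGap γ t *
      (‖S.energyGap γ t * S.prod (γ t) (S.covD γ (deriv γ) ξ (deriv ξ) t)
        (S.covD γ (deriv γ) ξ (deriv ξ) t)‖ + ‖(1 : ℝ)‖) := by
    have hweight : (fun t => (S.energyGap γ t)⁻¹) =O[𝓝[>] 0]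
        fun t => S.gapAccel γ t / S.energyGap γ t := by
      simpa only [one_mul, div_eq_mul_inv] using
        hγ.isBigO_one_gapAccel.mul (isBigO_refl (fun t => (S.energyGap γ t)⁻¹) _)
    refine (hweight.mul (hξ.isBigO_energyGap_mul_norm_deriv_sq hs hγ)).congr' ?_ .rfl
    filter_upwards [hγ.eventually_energyGap_pos] with t hφ
    exact inv_mul_cancel_left₀ hφ.ne' _
  have hrate_nonneg : ∀ᶠ t in 𝓝[>] 0, 0 ≤ S.gapAccel γ t / S.energyGap γ t := by
    filter_upwards [hγ.eventually_energyGap_pos, hγ.eventually_gapAccel_pos] with t hφ hacc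
    positivity
  simpa only [hγ.gapRate_zero, sub_zero] using
    isLittleO_norm_sub_sq_of_deriv hs hprim hint (henergy.norm.add (integrableOn_const (by simp)))
      hγ.continuousWithinAt_gapRate hγ.eventually_hasDerivAt_gapRate hrate_nonneg hle

omit hs in
lemma fderiv_V_zero : fderiv ℝ S.V (γ 0) (ξ 0) = 0 := by
  rw [← S.prod_grad hγ.zero_mem_U]
  exact hξ.2.2.1

lemma tendsto_fderiv_V : Tendsto (fun t => fderiv ℝ S.V (γ t) (ξ t)) (𝓝[>] 0) (𝓝 0) := by
  have hcont : ContinuousWithinAt (fun t => fderiv ℝ S.V (γ t) (ξ t)) (Ioi 0) 0 :=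
    ((S.contDiffAt_fderiv_V hγ.zero_mem_U).continuousAt.comp_continuousWithinAt
      hγ.continuousWithinAt_zero).clm_apply (hξ.continuousWithinAt_zero hs)
  simpa only [hξ.fderiv_V_zero hγ] using hcont.tendsto

lemma isLittleO_fderiv_V_sq :
    (fun t => fderiv ℝ S.V (γ t) (ξ t) ^ 2) =o[𝓝[>] 0] S.gapRate γ := by
  have hvar : (fun t => ‖(fderiv ℝ S.V (γ t) - fderiv ℝ S.V (γ 0)) (ξ t)‖ ^ 2) =o[𝓝[>] 0]
      S.gapRate γ := by
    have hdV : (fun t => fderiv ℝ S.V (γ t) - fderiv ℝ S.V (γ 0)) =O[𝓝[>] 0] S.energyGap γ :=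
      (((S.contDiffAt_fderiv_V hγ.zero_mem_U).differentiableAt
        one_ne_zero).isBigO_sub.comp_tendsto hγ.continuousWithinAt_zero).trans hγ.isBigO_sub_zero
    have happly := isBigO_clm_apply hdV ((hξ.continuousWithinAt_zero hs).isBigO_one ℝ)
    simp only [mul_one] at happly
    have hsq := happly.norm_left.mul
      (happly.norm_left.trans (hγ.tendsto_energyGap.isBigO_one ℝ))
    simp only [mul_one, ← sq] at hsq
    exact hsq.trans_isLittleO hγ.isLittleO_energyGap_gapRate
  have hfixed : (fun t => ‖fderiv ℝ S.V (γ 0) (ξ t - ξ 0)‖ ^ 2) =o[𝓝[>] 0] S.gapRate γ :=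
    (((fderiv ℝ S.V (γ 0)).isBigO_comp (fun t => ξ t - ξ 0) _).norm_norm.pow 2).trans_isLittleO
      (hξ.isLittleO_norm_sub_zero_sq hs hγ)
  refine ((isBigO_norm_add_sq _ _ _).trans_isLittleO (hvar.add hfixed)).congr_left fun t => ?_
  rw [Real.norm_eq_abs, sq_abs, _root_.sub_apply, map_sub, hξ.fderiv_V_zero hγ,
    sub_zero, sub_add_cancel]

lemma tendsto_gapRate_div_mul_fderiv_V_sq :
    Tendsto (fun t => S.gapRate γ t / (S.energyGap γ t * S.gradSq (γ t))
      * fderiv ℝ S.V (γ t) (ξ t) ^ 2) (𝓝[>] 0) (𝓝 0) := by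
  have hsmall : (fun t => S.gapRate γ t * fderiv ℝ S.V (γ t) (ξ t) ^ 2) =o[𝓝[>] 0]
      S.energyGap γ := by
    refine ((isBigO_refl (S.gapRate γ) _).mul_isLittleO
      (hξ.isLittleO_fderiv_V_sq hs hγ)).trans_isBigO ?_
    simpa only [sq] using hγ.isBigO_gapRate_sq
  have hlim := hsmall.tendsto_div_nhds_zero.mul
    (hγ.tendsto_gradSq.inv₀ hγ.gradSq_zero_pos.ne')
  rw [zero_mul] at hlim
  exact hlim.congr fun t => by ring

lemma tendsto_fderiv_V_mul_prod_tangentialVelocity :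
    Tendsto (fun t => fderiv ℝ S.V (γ t) (ξ t)
      * S.prod (γ t) (S.tangentialVelocity γ t) (ξ t)) (𝓝[>] 0) (𝓝 0) := by
  have hprod : (fun t => S.prod (γ t) (S.tangentialVelocity γ t) (ξ t)) =O[𝓝[>] 0]
      fun _ => (1 : ℝ) := by
    simpa only [mul_one] using
      (isBigO_prod hγ.zero_mem_U hγ.continuousWithinAt_zero (S.tangentialVelocity γ) ξ).trans
        (hγ.isBigO_tangentialVelocity.norm_left.mul
          ((hξ.continuousWithinAt_zero hs).norm.isBigO_one ℝ))
  have hmul := ((isLittleO_one_iff ℝ).2 (hξ.tendsto_fderiv_V hs hγ)).mul_isBigO hprod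
  simp only [mul_one] at hmul
  exact (isLittleO_one_iff ℝ).1 hmul

end InY

end Setting

/-- **Lemma 4.12**: for `ξ ∈ Y_s^W`, `g(∇V(γ),ξ) g(γ̇,ξ) → 0` as `s → 0⁺`. -/
theorem xi_boundary_limit {N : ℕ} (S : Setting N) (γ : ℝ → Vec N) (a : ℝ)
    (hγ : S.IsBdryGeo γ a) (s : ℝ) (hs : s ∈ Ioc (0:ℝ) a)
    (W : Vec N) (ξ : ℝ → Vec N) (hξ : S.InY γ s W ξ) :
    Tendsto (fun u => S.prod (γ u) (S.grad (γ u)) (ξ u)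
        * S.prod (γ u) (deriv γ u) (ξ u))
      (nhdsWithin 0 (Ioi 0)) (nhds 0) := by
  have hlim := (hξ.tendsto_fderiv_V_mul_prod_tangentialVelocity hs.1 hγ).sub
    (hξ.tendsto_gapRate_div_mul_fderiv_V_sq hs.1 hγ)
  rw [sub_zero] at hlim
  refine hlim.congr' ?_
  filter_upwards [hγ.eventually_mem_U] with u hU
  rw [S.prod_grad hU, Setting.prod_deriv_eq hU]
  ring

end

end JacobiPaper
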